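/- (Neighbour-sharing corollary.) Let G be a finite simple graph, a, b distinct vertices (possibly sharing common neighbours), w a nonnegative edge-weight function, C^m := min( w(E_a), w(E_b) ) the min-neighbourhood weight, and δ > 0 a real number. Suppose every edge e of G satisfies w(e) ≥ C^m/δ, and suppose every a–b cut-set F either contains all of E_a, or contains all of E_b, or has cardinality |F| ≥ δ. Then the weighted minimum cut between a and b equals C^m. -/

import Mathlib

/-!
The two neighbourhoods `E_a` and `E_b` are themselves cut-sets, since deleting all edges at a vertex
isolates it; so the value `Cm` is attained. Conversely, every cut-set `F` weighs at least `Cm`: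
if `F` contains `E_a` or `E_b` this is monotonicity of the sum of nonnegative weights, and otherwise
`F` has at least `δ` edges of weight at least `Cm / δ` each. Hence `Cm` is the least cut weight.
-/

open SimpleGraph Finset

/-- `F` is an `a`–`b` cut-set: a set of edges of `G` whose deletion disconnects `a` from `b`. -/
def IsCutSet {V : Type*} (G : SimpleGraph V) (a b : V) (F : Finset (Sym2 V)) : Prop :=
  (F : Set (Sym2 V)) ⊆ G.edgeSet ∧ ¬ (G.deleteEdges (F : Set (Sym2 V))).Reachable a b

/-- Deleting all edges at `x` isolates `x`: a walk from `x` to another vertex would have to start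
with a deleted edge. -/
lemma not_reachable_deleteEdges_incidenceFinset {V : Type*} [Fintype V] [DecidableEq V]
    (G : SimpleGraph V) [DecidableRel G.Adj] {x y : V} (hxy : x ≠ y) :
    ¬ (G.deleteEdges (G.incidenceFinset x : Set (Sym2 V))).Reachable x y := by
  rintro ⟨p⟩
  cases p with
  | nil => exact hxy rfl
  | cons h _ =>
    rw [deleteEdges_adj] at h
    apply h.2
    rw [Finset.mem_coe, mem_incidenceFinset]
    exact ⟨h.1, Sym2.mem_mk_left _ _⟩

/-- Neighbour-sharing corollary: even when the end-users `a`, `b` may share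
common neighbours, the threshold condition guarantees that the weighted minimum
cut equals the min-neighbourhood weight. -/
theorem neighbour_sharing_min_cut_eq
    {V : Type*} [Fintype V] [DecidableEq V] (G : SimpleGraph V) [DecidableRel G.Adj]
    (a b : V) (hab : a ≠ b)
    (w : Sym2 V → ℝ) (hw : ∀ e ∈ G.edgeSet, 0 ≤ w e)
    (Cm : ℝ)
    (hCm : Cm = min (∑ e ∈ G.incidenceFinset a, w e) (∑ e ∈ G.incidenceFinset b, w e))
    (δ : ℝ) (hδ : 0 < δ)
    (hthr : ∀ e ∈ G.edgeSet, Cm / δ ≤ w e)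
    (hcut : ∀ F : Finset (Sym2 V), IsCutSet G a b F →
      G.incidenceFinset a ⊆ F ∨ G.incidenceFinset b ⊆ F ∨ δ ≤ (F.card : ℝ)) :
    sInf {x : ℝ | ∃ F : Finset (Sym2 V), IsCutSet G a b F ∧ ∑ e ∈ F, w e = x} = Cm := by
  have sub : ∀ x, (G.incidenceFinset x : Set (Sym2 V)) ⊆ G.edgeSet := fun x e he =>
    ((G.mem_incidenceFinset x e).1 (Finset.mem_coe.1 he)).1
  have cut_a : IsCutSet G a b (G.incidenceFinset a) :=
    ⟨sub a, not_reachable_deleteEdges_incidenceFinset G hab⟩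
  have cut_b : IsCutSet G a b (G.incidenceFinset b) :=
    ⟨sub b, fun h => not_reachable_deleteEdges_incidenceFinset G hab.symm h.symm⟩
  have Cm_nonneg : 0 ≤ Cm := by
    rw [hCm]
    exact le_min (Finset.sum_nonneg fun e he => hw e (sub a he))
      (Finset.sum_nonneg fun e he => hw e (sub b he))
  refine IsLeast.csInf_eq ⟨?_, ?_⟩
  · rcases min_choice (∑ e ∈ G.incidenceFinset a, w e) (∑ e ∈ G.incidenceFinset b, w e) with h | h
    · exact ⟨_, cut_a, by rw [hCm, h]⟩
    · exact ⟨_, cut_b, by rw [hCm, h]⟩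
  · rintro _ ⟨F, hF, rfl⟩
    rcases hcut F hF with h | h | h
    · rw [hCm]
      exact (min_le_left _ _).trans
        (Finset.sum_le_sum_of_subset_of_nonneg h fun e he _ => hw e (hF.1 he))
    · rw [hCm]
      exact (min_le_right _ _).trans
        (Finset.sum_le_sum_of_subset_of_nonneg h fun e he _ => hw e (hF.1 he))
    · calc Cm = δ * (Cm / δ) := by field_simp
        _ ≤ F.card * (Cm / δ) := by gcongr
        _ = F.card • (Cm / δ) := (nsmul_eq_mul _ _).symm
        _ ≤ ∑ e ∈ F, w e := Finset.card_nsmul_le_sum _ _ _ fun e he => hthr e (hF.1 he)
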